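/- arXiv:1003.5493 — 6 statements merged into one kernel-verified Lean document; each statement's English description precedes it below -/
import Mathlib

section
/- A complex number s is an eigenvalue of the matrix A (viewed as a matrix over ℂ) if and only if s = 0 or there exists k ∈ {1, …, N} such that (s + α)² = α² − 4·(c/Δℓ)²·sin²(kπ/(2(N+1))). In particular, the nonzero eigenvalues are s = −α ± i·√(4(c/Δℓ)²·sin²(kπ/(2(N+1))) − α²) for k = 1, …, N. -/
/-!
For `s ≠ 0` the first block row of `A v = s v`, with `v = (p, q)`, determines `p` from `q`.
Substituting into the second block row gives the three-term recurrence
`q_{j+1} = 2 z q_j - q_{j-1}` with zero boundary values at both ends, where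
`2 z = 2 + s (s + 2 α) / (β γ)`. Its solutions vanishing at the left end are the multiples of
`j ↦ U_{j-1}(z)` (Chebyshev polynomials of the second kind), so a nonzero solution exists iff
`U_N(z) = 0` (`mem_spectrum_iff_chebyshev`). The complex roots of `U_N` are the numbers
`cos (kπ/(N+1))`, `1 ≤ k ≤ N`, as `U_N` splits over `ℝ` (`eval_U_complex_eq_zero_iff`), and
`1 - cos (2t) = 2 sin² t` turns this into the stated formula. For `s = 0` the vector `p = 1`,
`q = 0` lies in the kernel. The explicit eigenvalues satisfy the quadratic equation.
-/

open Polynomial Polynomial.Chebyshev in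
/-- Since `U_N` has `N` real roots, passing to `ℂ` adds no new ones. -/
lemma eval_U_complex_eq_zero_iff (N : ℕ) (z : ℂ) :
    (U ℂ N).eval z = 0 ↔
      ∃ k ∈ Finset.Icc 1 N, z = ((Real.cos ((k : ℝ) * Real.pi / ((N : ℝ) + 1)) : ℝ) : ℂ) := by
  have hne : U ℝ (N : ℤ) ≠ 0 := by
    intro h
    have h1 := U_eval_one (R := ℝ) (N : ℤ)
    rw [h] at h1
    simp only [eval_zero, Int.cast_natCast] at h1
    have : (0 : ℝ) ≤ N := Nat.cast_nonneg N
    linarith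
  have hcard : Multiset.card (U ℝ (N : ℤ)).roots = (U ℝ (N : ℤ)).natDegree := by
    have h := roots_U_real N
    have h2 := roots_U_real_nodup N
    rw [h, Finset.image_val, Finset.range_val, Multiset.dedup_eq_self.mpr h2]
    simp
  have hroots := (splits_iff_card_roots.mpr hcard).roots_map (algebraMap ℝ ℂ)
  rw [map_U] at hroots
  have hneC : U ℂ (N : ℤ) ≠ 0 := by
    rw [← map_U (algebraMap ℝ ℂ)]
    exact (Polynomial.map_ne_zero_iff (algebraMap ℝ ℂ).injective).mpr hne
  have hmem : (U ℂ (N : ℤ)).eval z = 0 ↔ z ∈ (U ℂ (N : ℤ)).roots := by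
    rw [mem_roots hneC, IsRoot.def]
  rw [hmem, hroots, roots_U_real]
  simp only [Multiset.mem_map, Finset.mem_val, Finset.mem_image, Finset.mem_range,
    Finset.mem_Icc]
  constructor
  · rintro ⟨_, ⟨k, hk, rfl⟩, rfl⟩
    exact ⟨k + 1, ⟨by omega, by omega⟩, by simp⟩
  · rintro ⟨k, ⟨hk1, hk2⟩, rfl⟩
    refine ⟨_, ⟨k - 1, by omega, rfl⟩, ?_⟩
    rw [Nat.cast_sub hk1]
    simp

lemma mem_spectrum_iff_exists_mulVec {n : Type*} [Fintype n] [DecidableEq n]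
    (A : Matrix n n ℂ) (s : ℂ) :
    s ∈ spectrum ℂ A ↔ ∃ v : n → ℂ, v ≠ 0 ∧ A.mulVec v = s • v := by
  rw [← Matrix.spectrum_toLin', ← Module.End.hasEigenvalue_iff_mem_spectrum]
  constructor
  · intro h
    obtain ⟨v, hv⟩ := h.exists_hasEigenvector
    exact ⟨v, hv.2, by simpa using hv.apply_eq_smul⟩
  · rintro ⟨v, hv0, hv⟩
    exact Module.End.hasEigenvalue_of_hasEigenvector (x := v)
      ⟨Module.End.mem_eigenspace_iff.mpr (by simpa using hv), hv0⟩

/-- A bidiagonal row applied to the interior values `x 1, …, x N` of a sequence with zero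
boundary values `x 0 = x (N + 1) = 0`. -/
lemma sum_bidiagonal (N i : ℕ) (hi : i ≤ N) (g : ℂ) (x : ℕ → ℂ) (h0 : x 0 = 0)
    (hN : x (N + 1) = 0) :
    ∑ j : Fin N, (if i = (j : ℕ) then -g else if i = (j : ℕ) + 1 then g else 0) * x (j + 1)
      = g * (x i - x (i + 1)) := by
  rw [Fin.sum_univ_eq_sum_range
    (fun j => (if i = j then -g else if i = j + 1 then g else 0) * x (j + 1)) N]
  have h : ∀ j ∈ Finset.range N, (if i = j then -g else if i = j + 1 then g else 0) * x (j + 1)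
      = (if i = j then -g * x (i + 1) else 0) + (if i = j + 1 then g * x i else 0) := by
    intro j _
    by_cases h1 : i = j
    · subst h1; simp
    · by_cases h2 : i = j + 1
      · subst h2; simp
      · simp [h1, h2]
  rw [Finset.sum_congr rfl h, Finset.sum_add_distrib, Finset.sum_ite_eq]
  have e1 : (if i ∈ Finset.range N then -g * x (i + 1) else 0) = -g * x (i + 1) := by
    split_ifs with h
    · rfl
    · have : i = N := by simp at h; omega
      rw [this, hN]; simp
  have e2 : ∑ j ∈ Finset.range N, (if i = j + 1 then g * x i else 0) = g * x i := by
    rcases i with _ | m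
    · simp [h0]
    · have : m < N := by omega
      simp [this]
  rw [e1, e2]; ring

open Polynomial Polynomial.Chebyshev in
/-- Solutions of the Chebyshev recurrence vanishing at `0` are multiples of `n ↦ U_{n-1}(z)`. -/
lemma eq_mul_eval_U (N : ℕ) (z : ℂ) (x : ℕ → ℂ) (h0 : x 0 = 0)
    (h : ∀ j < N, x (j + 2) = 2 * z * x (j + 1) - x j) :
    ∀ n ≤ N, x n = x 1 * (U ℂ ((n : ℤ) - 1)).eval z ∧
      x (n + 1) = x 1 * (U ℂ (n : ℤ)).eval z := by
  intro n
  induction n with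
  | zero => intro _; simp [h0]
  | succ m ih =>
    intro hm
    obtain ⟨i1, i2⟩ := ih (by omega)
    refine ⟨by simpa using i2, ?_⟩
    have hU := U_add_two ℂ ((m : ℤ) - 1)
    rw [show (m : ℤ) - 1 + 2 = ((m + 1 : ℕ) : ℤ) by push_cast; ring,
      show (m : ℤ) - 1 + 1 = (m : ℤ) by ring] at hU
    rw [h m (by omega), hU, i1, i2]
    simp only [eval_sub, eval_mul, eval_X, eval_ofNat]
    ring

open Polynomial Polynomial.Chebyshev in
/-- A nonzero `s` is an eigenvalue of the block matrix with off-diagonal bidiagonal blocks of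
weights `g`, `b` and lower right block `-2a` iff `U_N` vanishes at the point `z` with
`2 z = 2 + s (s + 2 a) / (b g)`. -/
lemma mem_spectrum_iff_chebyshev (N : ℕ) (g b a : ℂ) (hg : g ≠ 0) (hb : b ≠ 0)
    (A : Matrix (Fin (N + 1) ⊕ Fin N) (Fin (N + 1) ⊕ Fin N) ℂ)
    (h1 : ∀ (v : Fin (N + 1) ⊕ Fin N → ℂ) (x : ℕ → ℂ), x 0 = 0 → x (N + 1) = 0 →
      (∀ j : Fin N, v (Sum.inr j) = x (j + 1)) →
      ∀ i : Fin (N + 1), A.mulVec v (Sum.inl i) = g * (x i - x (i + 1)))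
    (h2 : ∀ (v : Fin (N + 1) ⊕ Fin N → ℂ) (i : Fin N), A.mulVec v (Sum.inr i) =
      b * (v (Sum.inl i.castSucc) - v (Sum.inl i.succ)) - 2 * a * v (Sum.inr i))
    (s z : ℂ) (hs : s ≠ 0) (hz : s * (s + 2 * a) = b * g * (2 * z - 2)) :
    s ∈ spectrum ℂ A ↔ (U ℂ (N : ℤ)).eval z = 0 := by
  rw [mem_spectrum_iff_exists_mulVec]
  constructor
  · rintro ⟨v, hv0, hv⟩
    obtain ⟨x, x0, xN, hx⟩ : ∃ x : ℕ → ℂ, x 0 = 0 ∧ x (N + 1) = 0 ∧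
        ∀ j : Fin N, v (Sum.inr j) = x (j + 1) := by
      refine ⟨fun n => if h : 0 < n ∧ n - 1 < N then v (Sum.inr ⟨n - 1, h.2⟩) else 0,
        by simp, by simp, ?_⟩
      intro j
      simp
    have p1 : ∀ i : Fin (N + 1), g * (x i - x (i + 1)) = s * v (Sum.inl i) := by
      intro i
      rw [← h1 v x x0 xN hx i, hv]; simp
    have p2 : ∀ i : Fin N, b * (v (Sum.inl i.castSucc) - v (Sum.inl i.succ))
        - 2 * a * x (i + 1) = s * x (i + 1) := by
      intro i
      rw [← hx i, ← h2 v i, hv]; simp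
    have hrec : ∀ j < N, x (j + 2) = 2 * z * x (j + 1) - x j := by
      intro j hj
      have q1 := p1 (Fin.castSucc ⟨j, hj⟩)
      have q2 := p1 (Fin.succ ⟨j, hj⟩)
      have q3 := p2 ⟨j, hj⟩
      simp only [Fin.val_castSucc, Fin.val_succ] at q1 q2 q3
      have : b * g * (x (j + 2) - (2 * z * x (j + 1) - x j)) = 0 := by
        linear_combination b * q1 - b * q2 + s * q3 + x (j + 1) * hz
      have := (mul_eq_zero.mp this).resolve_left (mul_ne_zero hb hg)
      linear_combination this
    have hU := eq_mul_eval_U N z x x0 hrec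
    have hx1 : x 1 ≠ 0 := by
      intro hx1
      have hx0 : ∀ n ≤ N + 1, x n = 0 := by
        intro n hn
        rcases n with _ | n
        · exact x0
        · rw [(hU n (by omega)).2, hx1, zero_mul]
      apply hv0
      ext i
      rcases i with i | j
      · have := p1 i
        rw [hx0 _ (by omega), hx0 _ (by omega)] at this
        simpa [hs] using this.symm
      · rw [hx j, hx0 _ (by omega)]; rfl
    have := (hU N le_rfl).2
    rw [xN] at this
    exact (mul_eq_zero.mp this.symm).resolve_left hx1
  · intro hU
    let x : ℕ → ℂ := fun n => (U ℂ ((n : ℤ) - 1)).eval z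
    have x0 : x 0 = 0 := by simp [x]
    have xN : x (N + 1) = 0 := by simpa [x] using hU
    have xrec : ∀ j, x (j + 2) = 2 * z * x (j + 1) - x j := by
      intro j
      have hU := U_add_two ℂ ((j : ℤ) - 1)
      simp only [x]
      rw [show ((j + 2 : ℕ) : ℤ) - 1 = (j : ℤ) - 1 + 2 by push_cast; ring, hU,
        show ((j + 1 : ℕ) : ℤ) - 1 = (j : ℤ) - 1 + 1 by push_cast; ring]
      simp only [eval_sub, eval_mul, eval_X, eval_ofNat]
    -- `N = 0` is excluded because `U_0 = 1` has no root.
    have hNpos : 0 < N := by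
      rcases Nat.eq_zero_or_pos N with h | h
      · subst h; simp at hU
      · exact h
    refine ⟨Sum.elim (fun i => g / s * (x i - x (i + 1))) (fun j => x (j + 1)), ?_, ?_⟩
    · intro h
      have := congrFun h (Sum.inr ⟨0, hNpos⟩)
      simp [x] at this
    · ext i
      rcases i with i | j
      · rw [h1 _ x x0 xN (fun j => rfl) i]
        simp only [Pi.smul_apply, Sum.elim_inl, smul_eq_mul]
        field_simp
      · rw [h2]
        simp only [Pi.smul_apply, Sum.elim_inl, Sum.elim_inr, smul_eq_mul, Fin.val_castSucc,
          Fin.val_succ]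
        rw [xrec j]
        field_simp
        linear_combination (-x (j + 1)) * hz

/-- A complex number `s` is an eigenvalue of the matrix `A` (over ℂ)
iff `s = 0` or `(s + α)² = α² − 4 (c/Δℓ)² sin²(kπ/(2(N+1)))` for some `k ∈ {1,…,N}`;
in particular the nonzero eigenvalues are `−α ± i √(4 (c/Δℓ)² sin²(kπ/(2(N+1))) − α²)`. -/
theorem stmt_0 (N : ℕ) (hN : 1 ≤ N) (c 𝒜 Δℓ α : ℝ)
    (hc : 0 < c) (h𝒜 : 0 < 𝒜) (hΔℓ : 0 < Δℓ) (hα : 0 < α)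
    (γ β : ℝ) (hγ : γ = c ^ 2 / (𝒜 * Δℓ)) (hβ : β = 𝒜 / Δℓ)
    (A : Matrix (Fin (N + 1) ⊕ Fin N) (Fin (N + 1) ⊕ Fin N) ℂ)
    (hA11 : ∀ i j, A (Sum.inl i) (Sum.inl j) = 0)
    (hA12 : ∀ i j, A (Sum.inl i) (Sum.inr j) =
      if (i : ℕ) = (j : ℕ) then (-γ : ℝ) else if (i : ℕ) = (j : ℕ) + 1 then (γ : ℝ) else 0)
    (hA21 : ∀ i j, A (Sum.inr i) (Sum.inl j) =
      if (j : ℕ) = (i : ℕ) then (β : ℝ) else if (j : ℕ) = (i : ℕ) + 1 then (-β : ℝ) else 0)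
    (hA22 : ∀ i j, A (Sum.inr i) (Sum.inr j) = if i = j then (-(2 * α) : ℝ) else 0)
    (s : ℂ) :
    (s ∈ spectrum ℂ A ↔
      s = 0 ∨ ∃ k ∈ Finset.Icc 1 N,
        (s + (α : ℂ)) ^ 2 =
          ((α ^ 2 - 4 * (c / Δℓ) ^ 2 *
            Real.sin ((k : ℝ) * Real.pi / (2 * ((N : ℝ) + 1))) ^ 2 : ℝ) : ℂ)) ∧
    (∀ k ∈ Finset.Icc 1 N,
      0 ≤ 4 * (c / Δℓ) ^ 2 * Real.sin ((k : ℝ) * Real.pi / (2 * ((N : ℝ) + 1))) ^ 2 - α ^ 2 →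
        ((-(α : ℂ) + Complex.I *
            (Real.sqrt (4 * (c / Δℓ) ^ 2 *
              Real.sin ((k : ℝ) * Real.pi / (2 * ((N : ℝ) + 1))) ^ 2 - α ^ 2) : ℝ))
              ∈ spectrum ℂ A ∧
         (-(α : ℂ) - Complex.I *
            (Real.sqrt (4 * (c / Δℓ) ^ 2 *
              Real.sin ((k : ℝ) * Real.pi / (2 * ((N : ℝ) + 1))) ^ 2 - α ^ 2) : ℝ))
              ∈ spectrum ℂ A)) := by
  have hγ0 : γ ≠ 0 := by rw [hγ]; positivity
  have hβ0 : β ≠ 0 := by rw [hβ]; positivity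
  have hβγ : β * γ = (c / Δℓ) ^ 2 := by rw [hβ, hγ]; field_simp
  have h1 : ∀ (v : Fin (N + 1) ⊕ Fin N → ℂ) (x : ℕ → ℂ), x 0 = 0 → x (N + 1) = 0 →
      (∀ j : Fin N, v (Sum.inr j) = x (j + 1)) →
      ∀ i : Fin (N + 1), A.mulVec v (Sum.inl i) = (γ : ℂ) * (x i - x (i + 1)) := by
    intro v x x0 xN hx i
    rw [← sum_bidiagonal N i (by omega) γ x x0 xN, Matrix.mulVec, dotProduct,
      Fintype.sum_sum_type]
    simp only [hA11, hA12, hx, zero_mul, Finset.sum_const_zero, zero_add]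
    refine Finset.sum_congr rfl fun j _ => ?_
    split_ifs <;> simp
  have h2 : ∀ (v : Fin (N + 1) ⊕ Fin N → ℂ) (i : Fin N), A.mulVec v (Sum.inr i) =
      (β : ℂ) * (v (Sum.inl i.castSucc) - v (Sum.inl i.succ)) - 2 * (α : ℂ) * v (Sum.inr i) := by
    intro v i
    rw [Matrix.mulVec, dotProduct, Fintype.sum_sum_type]
    have e1 : ∀ j : Fin (N + 1), A (Sum.inr i) (Sum.inl j) * v (Sum.inl j) =
        (if j = i.castSucc then (β : ℂ) * v (Sum.inl j) else 0) +
        (if j = i.succ then -(β : ℂ) * v (Sum.inl j) else 0) := by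
      intro j
      rw [hA21]
      simp only [Fin.ext_iff, Fin.val_castSucc, Fin.val_succ]
      by_cases a1 : (j : ℕ) = i
      · simp [a1]
      · by_cases a2 : (j : ℕ) = i + 1
        · simp [a2]
        · simp [a1, a2]
    have e2 : ∀ j : Fin N, A (Sum.inr i) (Sum.inr j) * v (Sum.inr j) =
        if i = j then -(2 * (α : ℂ)) * v (Sum.inr j) else 0 := by
      intro j
      rw [hA22]
      split_ifs <;> simp
    rw [Finset.sum_congr rfl (fun j _ => e1 j), Finset.sum_congr rfl (fun j _ => e2 j),
      Finset.sum_add_distrib]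
    simp only [Finset.sum_ite_eq, Finset.sum_ite_eq', Finset.mem_univ, if_true]
    ring
  have key : ∀ s : ℂ, s ∈ spectrum ℂ A ↔
      s = 0 ∨ ∃ k ∈ Finset.Icc 1 N,
        (s + (α : ℂ)) ^ 2 =
          ((α ^ 2 - 4 * (c / Δℓ) ^ 2 *
            Real.sin ((k : ℝ) * Real.pi / (2 * ((N : ℝ) + 1))) ^ 2 : ℝ) : ℂ) := by
    intro s
    by_cases hs : s = 0
    · subst hs
      refine iff_of_true ?_ (Or.inl rfl)
      rw [mem_spectrum_iff_exists_mulVec]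
      refine ⟨Sum.elim (fun _ => 1) (fun _ => 0), ?_, ?_⟩
      · intro h
        have := congrFun h (Sum.inl 0)
        simp at this
      · ext i
        rcases i with i | j
        · rw [h1 _ (fun _ => 0) rfl rfl (fun j => rfl) i]; simp
        · rw [h2]; simp
    · have hγC : (γ : ℂ) ≠ 0 := by exact_mod_cast hγ0
      have hβC : (β : ℂ) ≠ 0 := by exact_mod_cast hβ0
      have hz : s * (s + 2 * (α : ℂ)) =
          (β : ℂ) * γ * (2 * (1 + s * (s + 2 * α) / (2 * (β * γ))) - 2) := by
        field_simp
        ring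
      rw [mem_spectrum_iff_chebyshev N γ β α hγC hβC A h1 h2 s _ hs hz,
        eval_U_complex_eq_zero_iff]
      simp only [hs, false_or]
      refine exists_congr fun k => and_congr_right fun _ => ?_
      have hcos : Real.cos ((k : ℝ) * Real.pi / ((N : ℝ) + 1)) =
          1 - 2 * Real.sin ((k : ℝ) * Real.pi / (2 * ((N : ℝ) + 1))) ^ 2 := by
        have h : (k : ℝ) * Real.pi / ((N : ℝ) + 1) =
            2 * ((k : ℝ) * Real.pi / (2 * ((N : ℝ) + 1))) := by field_simp
        rw [h, Real.cos_two_mul, Real.cos_sq']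
        ring
      rw [hcos, ← hβγ]
      generalize Real.sin ((k : ℝ) * Real.pi / (2 * ((N : ℝ) + 1))) = S
      generalize 1 + s * (s + 2 * (α : ℂ)) / (2 * (β * γ)) = z at hz
      push_cast
      constructor
      · intro h
        rw [h] at hz
        linear_combination hz
      · intro h
        have h3 : (β : ℂ) * γ * (z - (1 - 2 * (S : ℂ) ^ 2)) = 0 := by
          linear_combination (1 / 2) * h - (1 / 2) * hz
        exact sub_eq_zero.mp ((mul_eq_zero.mp h3).resolve_left (mul_ne_zero hβC hγC))
  refine ⟨key s, fun k hk hpos => ?_⟩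
  have hsq := congrArg (fun r : ℝ => (r : ℂ)) (Real.sq_sqrt hpos)
  push_cast at hsq
  constructor
  · refine (key _).mpr (Or.inr ⟨k, hk, ?_⟩)
    push_cast
    linear_combination (Complex.I ^ 2) * hsq + (4 * ((c : ℂ) / Δℓ) ^ 2 *
      Complex.sin ((k : ℂ) * Real.pi / (2 * ((N : ℂ) + 1))) ^ 2 - (α : ℂ) ^ 2) * Complex.I_sq
  · refine (key _).mpr (Or.inr ⟨k, hk, ?_⟩)
    push_cast
    linear_combination (Complex.I ^ 2) * hsq + (4 * ((c : ℂ) / Δℓ) ^ 2 *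
      Complex.sin ((k : ℂ) * Real.pi / (2 * ((N : ℂ) + 1))) ^ 2 - (α : ℂ) ^ 2) * Complex.I_sq
end

section
/- For s ∈ ℂ, the determinant of the (2N+2)×(2N+2) bordered matrix [[s·I_{2N+1} − A, −B₁],[C₁, 0]] vanishes if and only if there exists k ∈ {1, …, N} such that (s + α)² = α² − 4·(c/Δℓ)²·sin²((2k−1)π/(2(2N+1))). (These are the zeros of the transfer function G₁₁(s) = C₁(sI−A)⁻¹B₁.) -/
/-!
The determinant vanishes iff the bordered matrix has a nonzero kernel vector `(p, q, u)`, that is,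
`p₀ = 0`, `s pᵢ = γ (qᵢ₋₁ - qᵢ)` with the conventions `q₋₁ = u` and `q_N = 0`, and
`(s + 2α) qᵢ = β (pᵢ - pᵢ₊₁)`. Solving from the left end, these equations determine `p` and `q`
from `u`: they give `qᵢ = u · fᵢ(w)`, where `w = s (s + 2α) / (γ β)` and the polynomials `fᵢ`
satisfy `f₀ = 1`, `f₁ = X + 1`, `fᵢ₊₂ = (X + 2) fᵢ₊₁ - fᵢ`. The remaining boundary
condition `q_N = 0` shows that a nonzero kernel vector exists iff `f_N(w) = 0`
(`exists_ladder_iff`).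

The polynomial `f_N` is monic of degree `N`, and `f_N(2 cos 2φ - 2) cos φ = cos ((2N+1) φ)`
(`ladderPoly_eval_cos`). Hence the `N` distinct numbers `-4 sin² φ_k`, where
`φ_k = (2k-1)π / (2(2N+1))` and `1 ≤ k ≤ N`, are all of its roots (`ladderPoly_eval_eq_zero_iff`).
Since `γ β = (c/Δℓ)²`, the equation `w = -4 sin² φ_k` is the stated one.
-/

open Polynomial in
/-- The polynomials `fₙ` with `f₀ = 1`, `f₁ = X + 1`, `fₙ₊₂ = (X + 2) fₙ₊₁ - fₙ`, which express
the flow in the `n`-th cell of the chain in terms of the inflow at its left end. In Chebyshev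
terms, `fₙ(X) = Uₙ(1 + X/2) - Uₙ₋₁(1 + X/2)`. -/
noncomputable def ladderPoly : ℕ → ℂ[X]
  | 0 => 1
  | 1 => X + 1
  | n + 2 => (X + 2) * ladderPoly (n + 1) - ladderPoly n

open Polynomial in
lemma ladderPoly_monic_natDegree (n : ℕ) :
    ((ladderPoly n).Monic ∧ (ladderPoly n).natDegree = n) ∧
      ((ladderPoly (n + 1)).Monic ∧ (ladderPoly (n + 1)).natDegree = n + 1) := by
  induction n with
  | zero =>
    have h : (X + 1 : ℂ[X]) = X + C 1 := by simp
    refine ⟨⟨by simp [ladderPoly], by simp [ladderPoly]⟩, ?_, ?_⟩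
    · rw [ladderPoly, h]; exact monic_X_add_C 1
    · rw [ladderPoly, h]; exact natDegree_X_add_C 1
  | succ n ih =>
    obtain ⟨⟨hm, hd⟩, hm', hd'⟩ := ih
    refine ⟨⟨hm', hd'⟩, ?_⟩
    have h2 : (X + 2 : ℂ[X]) = X + C 2 := rfl
    have hM : ((X + 2 : ℂ[X]) * ladderPoly (n + 1)).Monic := by
      rw [h2]; exact (monic_X_add_C 2).mul hm'
    have hD : ((X + 2 : ℂ[X]) * ladderPoly (n + 1)).natDegree = n + 2 := by
      rw [h2, (monic_X_add_C 2).natDegree_mul hm', natDegree_X_add_C, hd']; omega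
    have hlt : (ladderPoly n).natDegree <
        ((X + 2 : ℂ[X]) * ladderPoly (n + 1)).natDegree := by
      rw [hd, hD]; omega
    refine ⟨hM.sub_of_left (degree_lt_degree hlt), ?_⟩
    rw [ladderPoly, natDegree_sub_eq_left_of_natDegree_lt hlt, hD]

lemma ladderPoly_eval_succ_succ (n : ℕ) (w : ℂ) :
    (ladderPoly (n + 2)).eval w =
      (w + 2) * (ladderPoly (n + 1)).eval w - (ladderPoly n).eval w := by
  simp [ladderPoly]

/-- With `w = 2 cos 2φ - 2 = -4 sin² φ`, the recursion becomes the addition formula for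
`cos ((2n+1) φ)`. -/
lemma ladderPoly_eval_cos (φ : ℝ) (n : ℕ) :
    (ladderPoly n).eval ((-4 * Real.sin φ ^ 2 : ℝ) : ℂ) * (Real.cos φ : ℂ) =
        (Real.cos ((2 * n + 1) * φ) : ℂ) ∧
      (ladderPoly (n + 1)).eval ((-4 * Real.sin φ ^ 2 : ℝ) : ℂ) * (Real.cos φ : ℂ) =
        (Real.cos ((2 * (n + 1 : ℕ) + 1) * φ) : ℂ) := by
  induction n with
  | zero =>
    refine ⟨by simp [ladderPoly], ?_⟩
    have h : Real.cos ((2 * ((0 + 1 : ℕ) : ℝ) + 1) * φ) =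
        (-4 * Real.sin φ ^ 2 + 1) * Real.cos φ := by
      have : (2 * ((0 + 1 : ℕ) : ℝ) + 1) * φ = 3 * φ := by push_cast; ring
      rw [this, Real.cos_three_mul, Real.sin_sq]; ring
    rw [h]
    simp [ladderPoly]
  | succ n ih =>
    refine ⟨ih.2, ?_⟩
    rw [ladderPoly_eval_succ_succ, sub_mul, mul_assoc, ih.1, ih.2]
    have h1 : (2 * ((n + 1 + 1 : ℕ) : ℝ) + 1) * φ =
        (2 * ((n + 1 : ℕ) : ℝ) + 1) * φ + 2 * φ := by push_cast; ring
    have h2 : (2 * (n : ℝ) + 1) * φ = (2 * ((n + 1 : ℕ) : ℝ) + 1) * φ - 2 * φ := by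
      push_cast; ring
    rw [h1, h2, Real.cos_add, Real.cos_sub, Real.cos_two_mul]
    have h3 := Real.sin_sq φ
    rw [h3]
    push_cast
    ring

/-- The angle `φ_k` lies in `(0, π/2)` for `1 ≤ k ≤ N`. -/
lemma ladderAngle_mem {N k : ℕ} (hk : k ∈ Finset.Icc 1 N) :
    0 < (2 * (k : ℝ) - 1) * Real.pi / (2 * (2 * (N : ℝ) + 1)) ∧
      (2 * (k : ℝ) - 1) * Real.pi / (2 * (2 * (N : ℝ) + 1)) < Real.pi / 2 := by
  obtain ⟨h1, h2⟩ := Finset.mem_Icc.1 hk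
  have h1' : (1 : ℝ) ≤ k := by exact_mod_cast h1
  have h2' : (k : ℝ) ≤ N := by exact_mod_cast h2
  have hpi := Real.pi_pos
  refine ⟨by apply div_pos (mul_pos (by linarith) hpi) (by linarith), ?_⟩
  rw [div_lt_div_iff₀ (by linarith) (by norm_num)]
  nlinarith

/-- The roots of `f_N` are exactly the `N` numbers `-4 sin² φ_k`: they are distinct roots of a
polynomial of degree `N`. -/
lemma ladderPoly_eval_eq_zero_iff (N : ℕ) (w : ℂ) :
    (ladderPoly N).eval w = 0 ↔ ∃ k ∈ Finset.Icc 1 N,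
      w = ((-4 * Real.sin ((2 * (k : ℝ) - 1) * Real.pi / (2 * (2 * (N : ℝ) + 1))) ^ 2 : ℝ) : ℂ) := by
  obtain ⟨hm, hd⟩ := (ladderPoly_monic_natDegree N).1
  set g : ℕ → ℂ := fun k =>
    ((-4 * Real.sin ((2 * (k : ℝ) - 1) * Real.pi / (2 * (2 * (N : ℝ) + 1))) ^ 2 : ℝ) : ℂ) with hg
  have hinj : Set.InjOn g (Finset.Icc 1 N : Finset ℕ) := by
    intro k hk l hl hkl
    obtain ⟨hk0, hk1⟩ := ladderAngle_mem (Finset.mem_coe.1 hk)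
    obtain ⟨hl0, hl1⟩ := ladderAngle_mem (Finset.mem_coe.1 hl)
    have hpi := Real.pi_pos
    have hsk := Real.sin_pos_of_pos_of_lt_pi hk0 (by linarith)
    have hsl := Real.sin_pos_of_pos_of_lt_pi hl0 (by linarith)
    have h := Complex.ofReal_injective hkl
    have h := (pow_left_inj₀ hsk.le hsl.le two_ne_zero).1 (by linarith)
    have h := Real.injOn_sin ⟨by linarith, by linarith⟩ ⟨by linarith, by linarith⟩ h
    have hN : (0 : ℝ) < 2 * (2 * (N : ℝ) + 1) := by positivity
    rw [div_left_inj' hN.ne'] at h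
    have h := mul_right_cancel₀ hpi.ne' h
    exact_mod_cast (by linarith : (k : ℝ) = l)
  have hroot : ∀ k ∈ Finset.Icc 1 N, (ladderPoly N).eval (g k) = 0 := by
    intro k hk
    obtain ⟨hk0, hk1⟩ := ladderAngle_mem hk
    have h := (ladderPoly_eval_cos
      ((2 * (k : ℝ) - 1) * Real.pi / (2 * (2 * (N : ℝ) + 1))) N).1
    have hcos : Real.cos ((2 * (k : ℝ) - 1) * Real.pi / (2 * (2 * (N : ℝ) + 1))) ≠ 0 :=
      (Real.cos_pos_of_mem_Ioo ⟨by linarith, hk1⟩).ne'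
    have hzero : Real.cos ((2 * (N : ℝ) + 1) *
        ((2 * (k : ℝ) - 1) * Real.pi / (2 * (2 * (N : ℝ) + 1)))) = 0 := by
      rw [Real.cos_eq_zero_iff]
      refine ⟨(k : ℤ) - 1, ?_⟩
      have hN : (2 * (N : ℝ) + 1) ≠ 0 := by positivity
      push_cast
      field_simp
      ring
    rw [hzero, Complex.ofReal_zero] at h
    exact (mul_eq_zero.1 h).resolve_right (by exact_mod_cast hcos)
  have himg : (Finset.Icc 1 N).image g = (ladderPoly N).roots.toFinset := by
    apply Finset.eq_of_subset_of_card_le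
    · intro x hx
      obtain ⟨k, hk, rfl⟩ := Finset.mem_image.1 hx
      rw [Multiset.mem_toFinset, Polynomial.mem_roots hm.ne_zero]
      exact hroot k hk
    · rw [Finset.card_image_of_injOn hinj, Nat.card_Icc]
      have h1 := Multiset.toFinset_card_le (ladderPoly N).roots
      have h2 := Polynomial.card_roots' (ladderPoly N)
      omega
  have hmem : (ladderPoly N).eval w = 0 ↔ w ∈ (ladderPoly N).roots.toFinset := by
    rw [Multiset.mem_toFinset, Polynomial.mem_roots hm.ne_zero]; rfl
  rw [hmem, ← himg, Finset.mem_image]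
  exact exists_congr fun k => and_congr_right fun _ => eq_comm

/-- Summed form of the three-term recursion. -/
lemma ladderPoly_eval_succ_sub (w : ℂ) (n : ℕ) :
    (ladderPoly (n + 1)).eval w - (ladderPoly n).eval w =
      w * ∑ i ∈ Finset.range (n + 1), (ladderPoly i).eval w := by
  induction n with
  | zero => simp [ladderPoly]
  | succ n ih =>
    rw [Finset.sum_range_succ, mul_add, ← ih, ladderPoly_eval_succ_succ]; ring

/-- A nonzero solution of the kernel equations with free inflow `u` and `p 0 = 0` exists iff
`f_N` vanishes at `s t / (γ β)`; here `t` stands for `s + 2α`. Values of `p` beyond `N` and of `q`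
beyond `N - 1` are irrelevant. -/
lemma exists_ladder_iff {N : ℕ} (hN : 1 ≤ N) {s t γ β : ℂ} (hγ : γ ≠ 0) (hβ : β ≠ 0) :
    (∃ (p q : ℕ → ℂ) (u : ℂ),
      ((∃ i ≤ N, p i ≠ 0) ∨ (∃ i < N, q i ≠ 0) ∨ u ≠ 0) ∧
      p 0 = 0 ∧
      (∀ i < N + 1, s * p i + γ * (if i < N then q i else 0)
        - γ * (if i = 0 then u else q (i - 1)) = 0) ∧
      (∀ i < N, t * q i - β * p i + β * p (i + 1) = 0)) ↔
    (ladderPoly N).eval (s * t / (γ * β)) = 0 := by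
  set w := s * t / (γ * β) with hw
  set Q : ℕ → ℂ := fun n => (ladderPoly n).eval w with hQ
  set P : ℕ → ℂ := fun n => -(t / β) * ∑ i ∈ Finset.range n, Q i with hP
  have hQ0 : Q 0 = 1 := by simp [hQ, ladderPoly]
  have hP0 : P 0 = 0 := by simp [hP]
  have hPs : ∀ n, β * P (n + 1) = β * P n - t * Q n := by
    intro n
    simp only [hP, Finset.sum_range_succ]
    field_simp
    ring
  have hQs : ∀ n, γ * Q (n + 1) = γ * Q n - s * P (n + 1) := by
    intro n
    have h := ladderPoly_eval_succ_sub w n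
    have h' : Q (n + 1) = Q n + w * ∑ i ∈ Finset.range (n + 1), Q i := by
      rw [← h]; simp only [hQ]; ring
    rw [h']
    simp only [hP, hw]
    field_simp
    ring
  constructor
  · rintro ⟨p, q, u, hne, hp0, hrow, hcol⟩
    -- Left-to-right propagation determines `p` and `q` up to the factor `u`.
    have key : ∀ i, i < N → p i = u * P i ∧ q i = u * Q i := by
      intro i
      induction i with
      | zero =>
        intro hi
        have h := hrow 0 (by omega)
        rw [if_pos hi, if_pos rfl, hp0] at h
        refine ⟨by rw [hp0, hP0, mul_zero], ?_⟩
        rw [hQ0]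
        apply mul_left_cancel₀ hγ
        linear_combination h
      | succ i ih =>
        intro hi
        obtain ⟨h1, h2⟩ := ih (by omega)
        have hp : p (i + 1) = u * P (i + 1) := by
          apply mul_left_cancel₀ hβ
          have h := hcol i (by omega)
          rw [h1, h2] at h
          linear_combination h - u * hPs i
        refine ⟨hp, ?_⟩
        apply mul_left_cancel₀ hγ
        have h := hrow (i + 1) (by omega)
        rw [if_pos hi, if_neg (by omega), Nat.add_sub_cancel, h2, hp] at h
        linear_combination h - u * hQs i
    obtain ⟨M, rfl⟩ : ∃ M, N = M + 1 := ⟨N - 1, by omega⟩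
    obtain ⟨h1, h2⟩ := key M (by omega)
    have hpN : p (M + 1) = u * P (M + 1) := by
      apply mul_left_cancel₀ hβ
      have h := hcol M (by omega)
      rw [h1, h2] at h
      linear_combination h - u * hPs M
    have hend : u * Q (M + 1) = 0 := by
      have h := hrow (M + 1) (by omega)
      rw [if_neg (by omega), if_neg (by omega), Nat.add_sub_cancel, h2, hpN] at h
      apply mul_left_cancel₀ hγ
      linear_combination u * hQs M - h
    have hu : u ≠ 0 := by
      rintro rfl
      rcases hne with ⟨i, hi, h⟩ | ⟨i, hi, h⟩ | h
      · rcases Nat.lt_or_ge i (M + 1) with hi' | hi'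
        · exact h (by rw [(key i hi').1, zero_mul])
        · obtain rfl : i = M + 1 := by omega
          exact h (by rw [hpN, zero_mul])
      · exact h (by rw [(key i hi).2, zero_mul])
      · exact h rfl
    exact (mul_eq_zero.1 hend).resolve_left hu
  · intro h0
    have h0 : Q N = 0 := h0
    refine ⟨P, Q, 1, Or.inr (Or.inr one_ne_zero), hP0, ?_, ?_⟩
    · intro i hi
      have hite : (if i < N then Q i else 0) = Q i := by
        split_ifs with h
        · rfl
        · obtain rfl : i = N := by omega
          exact h0.symm
      rw [hite]
      rcases i with _ | i
      · rw [if_pos rfl, hP0, hQ0]; ring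
      · rw [if_neg (by omega), Nat.add_sub_cancel]
        linear_combination hQs i
    · intro i _
      linear_combination hPs i

/-- Action of a row of the bidiagonal block `A₁₂`. -/
lemma sum_bidiag_col (N : ℕ) (a b : ℂ) (q : ℕ → ℂ) (i : ℕ) (hi : i < N + 1) :
    ∑ j : Fin N, (if i = (j : ℕ) then a else if i = (j : ℕ) + 1 then b else 0) * q j =
      a * (if i < N then q i else 0) + b * (if i = 0 then 0 else q (i - 1)) := by
  rw [Fin.sum_univ_eq_sum_range
    (fun j => (if i = j then a else if i = j + 1 then b else 0) * q j) N]
  have h : ∀ j ∈ Finset.range N, (if i = j then a else if i = j + 1 then b else 0) * q j =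
      (if i = j then a * q j else 0) + (if i = j + 1 then b * q j else 0) := by
    intro j _
    split_ifs <;> first | omega | simp
  rw [Finset.sum_congr rfl h, Finset.sum_add_distrib, Finset.sum_ite_eq]
  congr 1
  · simp
  · rcases i with _ | i
    · simp
    · simp only [Nat.add_right_cancel_iff]
      rw [Finset.sum_ite_eq, if_pos (Finset.mem_range.2 (by omega))]
      simp

/-- Action of a row of the bidiagonal block `A₂₁`. -/
lemma sum_bidiag_row (N : ℕ) (a b : ℂ) (p : ℕ → ℂ) (i : ℕ) (hi : i < N) :
    ∑ j : Fin (N + 1), (if (j : ℕ) = i then a else if (j : ℕ) = i + 1 then b else 0) * p j =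
      a * p i + b * p (i + 1) := by
  rw [Fin.sum_univ_eq_sum_range
    (fun j => (if j = i then a else if j = i + 1 then b else 0) * p j) (N + 1)]
  have h : ∀ j ∈ Finset.range (N + 1), (if j = i then a else if j = i + 1 then b else 0) * p j =
      (if j = i then a * p j else 0) + (if j = i + 1 then b * p j else 0) := by
    intro j _
    split_ifs <;> first | omega | simp
  rw [Finset.sum_congr rfl h, Finset.sum_add_distrib, Finset.sum_ite_eq', Finset.sum_ite_eq',
    if_pos (Finset.mem_range.2 (by omega)), if_pos (Finset.mem_range.2 (by omega))]


/-- The determinant of the bordered matrix `[[sI − A, −B₁],[C₁, 0]]` vanishes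
iff `(s + α)² = α² − 4 (c/Δℓ)² sin²((2k−1)π/(2(2N+1)))` for some `k ∈ {1,…,N}`.
(These are the zeros of `G₁₁(s) = C₁ (sI − A)⁻¹ B₁`.) -/
theorem stmt_3 (N : ℕ) (hN : 1 ≤ N) (c 𝒜 Δℓ α : ℝ)
    (hc : 0 < c) (h𝒜 : 0 < 𝒜) (hΔℓ : 0 < Δℓ) (hα : 0 < α)
    (γ β : ℝ) (hγ : γ = c ^ 2 / (𝒜 * Δℓ)) (hβ : β = 𝒜 / Δℓ)
    (A : Matrix (Fin (N + 1) ⊕ Fin N) (Fin (N + 1) ⊕ Fin N) ℂ)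
    (hA11 : ∀ i j, A (Sum.inl i) (Sum.inl j) = 0)
    (hA12 : ∀ i j, A (Sum.inl i) (Sum.inr j) =
      if (i : ℕ) = (j : ℕ) then (-γ : ℝ) else if (i : ℕ) = (j : ℕ) + 1 then (γ : ℝ) else 0)
    (hA21 : ∀ i j, A (Sum.inr i) (Sum.inl j) =
      if (j : ℕ) = (i : ℕ) then (β : ℝ) else if (j : ℕ) = (i : ℕ) + 1 then (-β : ℝ) else 0)
    (hA22 : ∀ i j, A (Sum.inr i) (Sum.inr j) = if i = j then (-(2 * α) : ℝ) else 0)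
    (B₁ C₁ : Fin (N + 1) ⊕ Fin N → ℂ)
    (hB₁ : B₁ = fun x => if x = Sum.inl 0 then (γ : ℂ) else 0)
    (hC₁ : C₁ = fun x => if x = Sum.inl 0 then 1 else 0)
    (s : ℂ) :
    (Matrix.fromBlocks
        (s • (1 : Matrix (Fin (N + 1) ⊕ Fin N) (Fin (N + 1) ⊕ Fin N) ℂ) - A)
        (Matrix.of fun i (_ : Fin 1) => -B₁ i)
        (Matrix.of fun (_ : Fin 1) j => C₁ j)
        (0 : Matrix (Fin 1) (Fin 1) ℂ)).det = 0 ↔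
      ∃ k ∈ Finset.Icc 1 N,
        (s + (α : ℂ)) ^ 2 =
          ((α ^ 2 - 4 * (c / Δℓ) ^ 2 *
            Real.sin ((2 * (k : ℝ) - 1) * Real.pi / (2 * (2 * (N : ℝ) + 1))) ^ 2 : ℝ) : ℂ) := by
  simp only [apply_ite Complex.ofReal, Complex.ofReal_zero] at hA12 hA21 hA22
  have hγ0 : (γ : ℂ) ≠ 0 := by
    have : 0 < γ := by rw [hγ]; positivity
    exact_mod_cast this.ne'
  have hβ0 : (β : ℂ) ≠ 0 := by
    have : 0 < β := by rw [hβ]; positivity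
    exact_mod_cast this.ne'
  have hγβ : (γ : ℂ) * β = (c / Δℓ : ℂ) ^ 2 := by
    have : γ * β = (c / Δℓ) ^ 2 := by rw [hγ, hβ]; field_simp
    exact_mod_cast this
  -- The kernel equations, read off row by row for a vector given by sequences `p`, `q` and `u`.
  have hker : ∀ (p q : ℕ → ℂ) (u : ℂ),
      Matrix.mulVec (Matrix.fromBlocks
        (s • (1 : Matrix (Fin (N + 1) ⊕ Fin N) (Fin (N + 1) ⊕ Fin N) ℂ) - A)
        (Matrix.of fun i (_ : Fin 1) => -B₁ i)
        (Matrix.of fun (_ : Fin 1) j => C₁ j)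
        (0 : Matrix (Fin 1) (Fin 1) ℂ))
        (Sum.elim (Sum.elim (fun i => p i) (fun i => q i)) (fun _ => u)) = 0 ↔
      p 0 = 0 ∧
      (∀ i < N + 1, s * p i + γ * (if i < N then q i else 0)
        - γ * (if i = 0 then u else q (i - 1)) = 0) ∧
      (∀ i < N, (s + 2 * α) * q i - β * p i + β * p (i + 1) = 0) := by
    intro p q u
    have hrow : ∀ i : Fin (N + 1), Matrix.mulVec (Matrix.fromBlocks
        (s • (1 : Matrix (Fin (N + 1) ⊕ Fin N) (Fin (N + 1) ⊕ Fin N) ℂ) - A)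
        (Matrix.of fun i (_ : Fin 1) => -B₁ i)
        (Matrix.of fun (_ : Fin 1) j => C₁ j)
        (0 : Matrix (Fin 1) (Fin 1) ℂ))
        (Sum.elim (Sum.elim (fun i => p i) (fun i => q i)) (fun _ => u)) (Sum.inl (Sum.inl i)) =
        s * p i + γ * (if (i : ℕ) < N then q i else 0)
          - γ * (if (i : ℕ) = 0 then u else q ((i : ℕ) - 1)) := by
      intro i
      have h := sum_bidiag_col N ((-γ : ℝ) : ℂ) ((γ : ℝ) : ℂ) q i i.2
      simp only [Matrix.mulVec, dotProduct, Fintype.sum_sum_type, Matrix.fromBlocks_apply₁₁,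
        Matrix.fromBlocks_apply₁₂, Sum.elim_inl, Sum.elim_inr, Matrix.sub_apply, Matrix.smul_apply,
        Matrix.one_apply, Matrix.of_apply, hA11, hA12, hB₁, sub_mul, Finset.sum_sub_distrib, h,
        Sum.inl.injEq, reduceCtorEq, if_false]
      have hi0 : i = 0 ↔ (i : ℕ) = 0 := by rw [Fin.ext_iff]; rfl
      simp only [hi0]
      by_cases h0 : (i : ℕ) = 0
      · simp [h0]
        split_ifs <;> ring
      · simp [h0]
        split_ifs <;> ring
    have hcol : ∀ i : Fin N, Matrix.mulVec (Matrix.fromBlocks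
        (s • (1 : Matrix (Fin (N + 1) ⊕ Fin N) (Fin (N + 1) ⊕ Fin N) ℂ) - A)
        (Matrix.of fun i (_ : Fin 1) => -B₁ i)
        (Matrix.of fun (_ : Fin 1) j => C₁ j)
        (0 : Matrix (Fin 1) (Fin 1) ℂ))
        (Sum.elim (Sum.elim (fun i => p i) (fun i => q i)) (fun _ => u)) (Sum.inl (Sum.inr i)) =
        (s + 2 * α) * q i - β * p i + β * p (i + 1) := by
      intro i
      have h := sum_bidiag_row N ((β : ℝ) : ℂ) ((-β : ℝ) : ℂ) p i i.2
      simp only [Matrix.mulVec, dotProduct, Fintype.sum_sum_type, Matrix.fromBlocks_apply₁₁,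
        Matrix.fromBlocks_apply₁₂, Sum.elim_inl, Sum.elim_inr, Matrix.sub_apply, Matrix.smul_apply,
        Matrix.one_apply, Matrix.of_apply, hA21, hA22, hB₁, sub_mul, Finset.sum_sub_distrib, h,
        Sum.inr.injEq, reduceCtorEq, if_false]
      simp
      ring
    have hbot : ∀ i : Fin 1, Matrix.mulVec (Matrix.fromBlocks
        (s • (1 : Matrix (Fin (N + 1) ⊕ Fin N) (Fin (N + 1) ⊕ Fin N) ℂ) - A)
        (Matrix.of fun i (_ : Fin 1) => -B₁ i)
        (Matrix.of fun (_ : Fin 1) j => C₁ j)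
        (0 : Matrix (Fin 1) (Fin 1) ℂ))
        (Sum.elim (Sum.elim (fun i => p i) (fun i => q i)) (fun _ => u)) (Sum.inr i) = p 0 := by
      intro i
      simp [Matrix.mulVec, dotProduct, Fintype.sum_sum_type, hC₁]
    rw [funext_iff]
    constructor
    · intro h
      refine ⟨(hbot 0).symm.trans (h _), fun i hi => ?_, fun i hi => ?_⟩
      · exact (hrow ⟨i, hi⟩).symm.trans (h _)
      · exact (hcol ⟨i, hi⟩).symm.trans (h _)
    · rintro ⟨h0, h1, h2⟩ ((i | i) | i)
      · exact (hrow i).trans (h1 i i.2)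
      · exact (hcol i).trans (h2 i i.2)
      · exact (hbot i).trans h0
  rw [← Matrix.exists_mulVec_eq_zero_iff]
  trans (ladderPoly N).eval (s * (s + 2 * α) / (γ * β)) = 0
  · rw [← exists_ladder_iff hN hγ0 hβ0]
    constructor
    · rintro ⟨v, hv, hMv⟩
      -- Extend the blocks of `v` by zero to sequences indexed by `ℕ`.
      let p : ℕ → ℂ := fun n => if h : n < N + 1 then v (Sum.inl (Sum.inl ⟨n, h⟩)) else 0
      let q : ℕ → ℂ := fun n => if h : n < N then v (Sum.inl (Sum.inr ⟨n, h⟩)) else 0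
      have hv' : v = Sum.elim (Sum.elim (fun i : Fin (N + 1) => p i) (fun i : Fin N => q i))
          (fun _ => v (Sum.inr 0)) := by
        ext ((i | i) | i)
        · simp only [Sum.elim_inl, p, dif_pos i.2]
        · simp only [Sum.elim_inl, Sum.elim_inr, q, dif_pos i.2]
        · rw [Subsingleton.elim i 0]; rfl
      refine ⟨p, q, v (Sum.inr 0), ?_, (hker p q _).1 (hv' ▸ hMv)⟩
      by_contra! hcon
      obtain ⟨h1, h2, h3⟩ := hcon
      apply hv
      rw [hv']
      ext ((i | i) | i)
      · exact h1 i (Nat.lt_succ_iff.1 i.2)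
      · exact h2 i i.2
      · exact h3
    · rintro ⟨p, q, u, hne, h⟩
      refine ⟨_, ?_, (hker p q u).2 h⟩
      intro hz
      rcases hne with ⟨i, hi, h⟩ | ⟨i, hi, h⟩ | h
      · exact h (congrFun hz (Sum.inl (Sum.inl ⟨i, Nat.lt_succ_of_le hi⟩)))
      · exact h (congrFun hz (Sum.inl (Sum.inr ⟨i, hi⟩)))
      · exact h (congrFun hz (Sum.inr 0))
  · rw [ladderPoly_eval_eq_zero_iff]
    refine exists_congr fun k => and_congr_right fun _ => ?_
    rw [div_eq_iff (mul_ne_zero hγ0 hβ0), hγβ]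
    push_cast
    constructor <;> intro h <;> linear_combination h
end

section
/- For every s ∈ ℂ such that the matrix s·I_{2N+1} − A is invertible, one has C₂·(sI − A)⁻¹·B₂ = − C₁·(sI − A)⁻¹·B₁; that is, the transfer functions satisfy G₂₂(s) = −G₁₁(s). -/
/-!
The matrix `A` is invariant under reversing the spatial axis: the permutation `mirror` sends node `i`
to node `N - i` and edge `j` to edge `N - 1 - j`, and since reversal flips the orientation of the
edges, it must be combined with a sign change on the edge coordinates. With `D` the diagonal matrix
of these signs, `sI - A` permuted by `mirror` equals `D (sI - A) D`, and `D² = 1`, so the same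
relation holds between the inverses (`inv_mirror_apply`). As `mirror` exchanges the end nodes, the
two corresponding diagonal entries of `(sI - A)⁻¹` agree, and `B₂` carries the opposite sign to `B₁`.
-/

open Matrix

/-- Reversal of the chain of `N + 1` nodes (`inl`) and `N` edges (`inr`). -/
def mirror (N : ℕ) : (Fin (N + 1) ⊕ Fin N) ≃ (Fin (N + 1) ⊕ Fin N) :=
  Equiv.sumCongr Fin.revPerm Fin.revPerm

/-- The action of the reversal on orientations: `1` on nodes, `-1` on edges. -/
def mirrorSign (N : ℕ) : Fin (N + 1) ⊕ Fin N → ℂ :=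
  Sum.elim (fun _ => 1) (fun _ => -1)

/-- Invariance under the signed reversal passes to the inverse. -/
lemma inv_mirror_apply {N : ℕ} (M : Matrix (Fin (N + 1) ⊕ Fin N) (Fin (N + 1) ⊕ Fin N) ℂ)
    (hM : ∀ x y, M (mirror N x) (mirror N y) = mirrorSign N x * M x y * mirrorSign N y)
    (x y : Fin (N + 1) ⊕ Fin N) :
    M⁻¹ (mirror N x) (mirror N y) = mirrorSign N x * M⁻¹ x y * mirrorSign N y := by
  have hD : (diagonal (mirrorSign N))⁻¹ = diagonal (mirrorSign N) := by
    apply Matrix.inv_eq_right_inv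
    rw [diagonal_mul_diagonal, ← diagonal_one]
    congr 1
    ext z
    rcases z with z | z <;> simp [mirrorSign]
  have h : M.submatrix (mirror N) (mirror N) =
      diagonal (mirrorSign N) * M * diagonal (mirrorSign N) := by
    ext a b
    rw [mul_diagonal, diagonal_mul, submatrix_apply, hM]
  have h2 := congrArg (fun X => X⁻¹ x y) h
  simpa [inv_submatrix_equiv, Matrix.mul_inv_rev, hD, mul_diagonal, diagonal_mul,
    mul_assoc] using h2

/-- For every `s ∈ ℂ` with `sI − A` invertible,
`C₂ (sI − A)⁻¹ B₂ = − C₁ (sI − A)⁻¹ B₁`, i.e. `G₂₂(s) = −G₁₁(s)`. -/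
theorem stmt_6 (N : ℕ) (hN : 1 ≤ N) (c 𝒜 Δℓ α : ℝ)
    (hc : 0 < c) (h𝒜 : 0 < 𝒜) (hΔℓ : 0 < Δℓ) (hα : 0 < α)
    (γ β : ℝ) (hγ : γ = c ^ 2 / (𝒜 * Δℓ)) (hβ : β = 𝒜 / Δℓ)
    (A : Matrix (Fin (N + 1) ⊕ Fin N) (Fin (N + 1) ⊕ Fin N) ℂ)
    (hA11 : ∀ i j, A (Sum.inl i) (Sum.inl j) = 0)
    (hA12 : ∀ i j, A (Sum.inl i) (Sum.inr j) =
      if (i : ℕ) = (j : ℕ) then (-γ : ℝ) else if (i : ℕ) = (j : ℕ) + 1 then (γ : ℝ) else 0)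
    (hA21 : ∀ i j, A (Sum.inr i) (Sum.inl j) =
      if (j : ℕ) = (i : ℕ) then (β : ℝ) else if (j : ℕ) = (i : ℕ) + 1 then (-β : ℝ) else 0)
    (hA22 : ∀ i j, A (Sum.inr i) (Sum.inr j) = if i = j then (-(2 * α) : ℝ) else 0)
    (B₁ C₁ B₂ C₂ : Fin (N + 1) ⊕ Fin N → ℂ)
    (hB₁ : B₁ = fun x => if x = Sum.inl 0 then (γ : ℂ) else 0)
    (hC₁ : C₁ = fun x => if x = Sum.inl 0 then 1 else 0)
    (hB₂ : B₂ = fun x => if x = Sum.inl (Fin.last N) then (-γ : ℂ) else 0)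
    (hC₂ : C₂ = fun x => if x = Sum.inl (Fin.last N) then 1 else 0)
    (s : ℂ)
    (hs : IsUnit (s • (1 : Matrix (Fin (N + 1) ⊕ Fin N) (Fin (N + 1) ⊕ Fin N) ℂ) - A).det) :
    C₂ ⬝ᵥ (s • (1 : Matrix (Fin (N + 1) ⊕ Fin N) (Fin (N + 1) ⊕ Fin N) ℂ) - A)⁻¹.mulVec B₂ =
      -(C₁ ⬝ᵥ (s • (1 : Matrix (Fin (N + 1) ⊕ Fin N) (Fin (N + 1) ⊕ Fin N) ℂ) - A)⁻¹.mulVec B₁) := by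
  have hM := inv_mirror_apply (s • (1 : Matrix (Fin (N + 1) ⊕ Fin N) (Fin (N + 1) ⊕ Fin N) ℂ) - A)
    (by
      rintro (i | i) (j | j)
      · simp [mirror, mirrorSign, hA11, Matrix.one_apply]
      · have e1 : (N - (i : ℕ) = N - ((j : ℕ) + 1)) ↔ (i : ℕ) = j + 1 := by omega
        have e2 : (N - (i : ℕ) = N - ((j : ℕ) + 1) + 1) ↔ (i : ℕ) = j := by omega
        simp only [mirror, mirrorSign, Equiv.sumCongr_apply, Sum.map_inl, Sum.map_inr,
          Fin.revPerm_apply, Matrix.sub_apply, Matrix.smul_apply, Matrix.one_apply, hA12,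
          Fin.val_rev, Nat.add_sub_add_right, e1, e2, reduceCtorEq, if_false,
          Sum.elim_inl, Sum.elim_inr]
        split_ifs <;> first | omega | simp
      · have e1 : (N - (j : ℕ) = N - ((i : ℕ) + 1)) ↔ (j : ℕ) = i + 1 := by omega
        have e2 : (N - (j : ℕ) = N - ((i : ℕ) + 1) + 1) ↔ (j : ℕ) = i := by omega
        simp only [mirror, mirrorSign, Equiv.sumCongr_apply, Sum.map_inl, Sum.map_inr,
          Fin.revPerm_apply, Matrix.sub_apply, Matrix.smul_apply, Matrix.one_apply, hA21,
          Fin.val_rev, Nat.add_sub_add_right, e1, e2, reduceCtorEq, if_false,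
          Sum.elim_inl, Sum.elim_inr]
        split_ifs <;> first | omega | simp
      · simp [mirror, mirrorSign, hA22, Matrix.one_apply])
    (Sum.inl 0) (Sum.inl 0)
  simp only [mirror, mirrorSign, Equiv.sumCongr_apply, Sum.map_inl, Fin.revPerm_apply,
    Fin.rev_zero, Sum.elim_inl, one_mul, mul_one] at hM
  subst hB₁ hB₂ hC₁ hC₂
  simp [dotProduct, Matrix.mulVec, -Fintype.sum_sum_type, hM]
end

section
/- For every s ∈ ℂ, the determinant of the (2N+2)×(2N+2) bordered matrix [[s·I_{2N+1} − A, −B₂],[C₁, 0]] is nonzero; that is, the transfer function G₁₂(s) = C₁(sI−A)⁻¹B₂ has no zeros. -/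
/-!
A vanishing determinant would give a nonzero kernel vector `(p, q, w)` of the bordered matrix, whose
coordinates satisfy
* `p 0 = 0` (the border row `C₁`),
* `s p_i + γ q_i - γ q_{i-1} = 0` for `i < N` (with `q_{-1} = 0`), and `s p_N - γ q_{N-1} + γ w = 0`,
* `(s + 2α) q_j - β p_j + β p_{j+1} = 0`.
As `γ` and `β` are nonzero, these equations can be solved along the chain starting from `p 0 = 0`:
the row of `p_k` forces `q_k = 0`, then the row of `q_k` forces `p_{k+1} = 0`, and the last row
forces `w = 0`, whatever the value of `s`.
-/

/-- For every `s ∈ ℂ`, the determinant of the bordered matrix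
`[[sI − A, −B₂],[C₁, 0]]` is nonzero; i.e. `G₁₂(s) = C₁ (sI − A)⁻¹ B₂` has no zeros. -/
theorem stmt_7 (N : ℕ) (hN : 1 ≤ N) (c 𝒜 Δℓ α : ℝ)
    (hc : 0 < c) (h𝒜 : 0 < 𝒜) (hΔℓ : 0 < Δℓ) (hα : 0 < α)
    (γ β : ℝ) (hγ : γ = c ^ 2 / (𝒜 * Δℓ)) (hβ : β = 𝒜 / Δℓ)
    (A : Matrix (Fin (N + 1) ⊕ Fin N) (Fin (N + 1) ⊕ Fin N) ℂ)
    (hA11 : ∀ i j, A (Sum.inl i) (Sum.inl j) = 0)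
    (hA12 : ∀ i j, A (Sum.inl i) (Sum.inr j) =
      if (i : ℕ) = (j : ℕ) then (-γ : ℝ) else if (i : ℕ) = (j : ℕ) + 1 then (γ : ℝ) else 0)
    (hA21 : ∀ i j, A (Sum.inr i) (Sum.inl j) =
      if (j : ℕ) = (i : ℕ) then (β : ℝ) else if (j : ℕ) = (i : ℕ) + 1 then (-β : ℝ) else 0)
    (hA22 : ∀ i j, A (Sum.inr i) (Sum.inr j) = if i = j then (-(2 * α) : ℝ) else 0)
    (B₂ C₁ : Fin (N + 1) ⊕ Fin N → ℂ)
    (hB₂ : B₂ = fun x => if x = Sum.inl (Fin.last N) then (-γ : ℂ) else 0)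
    (hC₁ : C₁ = fun x => if x = Sum.inl 0 then 1 else 0)
    (s : ℂ) :
    (Matrix.fromBlocks
        (s • (1 : Matrix (Fin (N + 1) ⊕ Fin N) (Fin (N + 1) ⊕ Fin N) ℂ) - A)
        (Matrix.of fun i (_ : Fin 1) => -B₂ i)
        (Matrix.of fun (_ : Fin 1) j => C₁ j)
        (0 : Matrix (Fin 1) (Fin 1) ℂ)).det ≠ 0 := by
  have hγ0 : (γ : ℂ) ≠ 0 := by
    have : 0 < γ := by rw [hγ]; positivity
    exact_mod_cast this.ne'
  have hβ0 : (β : ℂ) ≠ 0 := by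
    have : 0 < β := by rw [hβ]; positivity
    exact_mod_cast this.ne'
  intro hdet
  obtain ⟨v, hv, hMv⟩ := Matrix.exists_mulVec_eq_zero_iff.mpr hdet
  obtain ⟨p, hp⟩ : ∃ p : Fin (N + 1) → ℂ, ∀ i, v (Sum.inl (Sum.inl i)) = p i := ⟨_, fun _ => rfl⟩
  obtain ⟨q, hq⟩ : ∃ q : Fin N → ℂ, ∀ j, v (Sum.inl (Sum.inr j)) = q j := ⟨_, fun _ => rfl⟩
  obtain ⟨w, hw⟩ : ∃ w : ℂ, v (Sum.inr 0) = w := ⟨_, rfl⟩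
  -- The three families of scalar equations contained in `M v = 0`.
  have hp0 : p 0 = 0 := by
    have h := congrFun hMv (Sum.inr 0)
    simpa [Matrix.mulVec, dotProduct, Fintype.sum_sum_type, hC₁, hp, hq] using h
  have hrowp : ∀ i : Fin (N + 1), s * p i - ∑ j, A (Sum.inl i) (Sum.inr j) * q j
      + (if i = Fin.last N then (γ : ℂ) else 0) * w = 0 := by
    intro i
    have h := congrFun hMv (Sum.inl (Sum.inl i))
    simp only [Matrix.mulVec, dotProduct, Fintype.sum_sum_type, Matrix.fromBlocks_apply₁₁,
      Matrix.fromBlocks_apply₁₂, Matrix.sub_apply, Matrix.smul_apply, Matrix.one_apply,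
      hA11, hB₂, hp, hq, hw, Matrix.of_apply, Finset.univ_unique, Finset.sum_singleton,
      Fin.default_eq_zero, Pi.zero_apply, Sum.inl.injEq, reduceCtorEq, if_false, smul_eq_mul,
      mul_zero, zero_sub, sub_zero, neg_mul, Finset.sum_neg_distrib, mul_ite, mul_one, ite_mul,
      zero_mul, Finset.sum_ite_eq, Finset.mem_univ, if_true] at h
    split_ifs at h ⊢ <;> linear_combination h
  have hrowq : ∀ j : Fin N, (s + 2 * α) * q j - ∑ i, A (Sum.inr j) (Sum.inl i) * p i = 0 := by
    intro j
    have h := congrFun hMv (Sum.inl (Sum.inr j))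
    simp only [Matrix.mulVec, dotProduct, Fintype.sum_sum_type, Matrix.fromBlocks_apply₁₁,
      Matrix.fromBlocks_apply₁₂, Matrix.sub_apply, Matrix.smul_apply, Matrix.one_apply,
      hA22, hB₂, hp, hq, apply_ite Complex.ofReal, Complex.ofReal_zero, Matrix.of_apply,
      Finset.univ_unique, Finset.sum_singleton,
      Fin.default_eq_zero, Pi.zero_apply, reduceCtorEq, if_false, smul_eq_mul,
      mul_zero, mul_ite, mul_one, ite_mul,
      zero_mul, neg_zero, add_zero, sub_mul, Finset.sum_sub_distrib,
      Finset.sum_ite_eq, Finset.mem_univ, if_true] at h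
    push_cast at h
    linear_combination h
  have key : ∀ k : ℕ, (∀ i : Fin (N + 1), (i : ℕ) ≤ k → p i = 0) ∧
      (∀ j : Fin N, (j : ℕ) < k → q j = 0) := by
    intro k
    induction k with
    | zero =>
      refine ⟨fun i hi => ?_, fun j hj => absurd hj (Nat.not_lt_zero _)⟩
      have : i = 0 := Fin.ext (by simpa using hi)
      rw [this, hp0]
    | succ k ih =>
      obtain ⟨ihp, ihq⟩ := ih
      have hqk : ∀ j : Fin N, (j : ℕ) < k + 1 → q j = 0 := by
        intro j hj
        rcases Nat.lt_succ_iff_lt_or_eq.mp hj with hj | hj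
        · exact ihq j hj
        -- Only the diagonal term survives in the row of `p_k`: earlier `q` vanish by induction.
        have h := hrowp j.castSucc
        rw [ihp j.castSucc (by simp [hj]), if_neg (Fin.castSucc_lt_last j).ne,
          Finset.sum_eq_single j] at h
        · rw [hA12] at h
          simpa [hγ0] using h
        · intro b _ hb
          rw [hA12]
          have hb' : (b : ℕ) ≠ j := fun e => hb (Fin.ext e)
          by_cases hbk : (b : ℕ) < k
          · rw [ihq b hbk, mul_zero]
          · rw [if_neg (by simp; omega), if_neg (by simp; omega), Complex.ofReal_zero, zero_mul]
        · simp
      refine ⟨fun i hi => ?_, hqk⟩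
      rcases Nat.le_succ_iff.mp hi with hi | hi
      · exact ihp i hi
      have hkN : k < N := by have := i.isLt; omega
      have h := hrowq ⟨k, hkN⟩
      rw [hqk ⟨k, hkN⟩ (Nat.lt_succ_self k), Finset.sum_eq_single i] at h
      · rw [hA21, if_neg (by simp; omega), if_pos (by simpa using hi)] at h
        simpa [hβ0] using h
      · intro b _ hb
        rw [hA21]
        have hb' : (b : ℕ) ≠ i := fun e => hb (Fin.ext e)
        by_cases hbk : (b : ℕ) ≤ k
        · rw [ihp b hbk, mul_zero]
        · rw [if_neg (by simp; omega), if_neg (by simp; omega), Complex.ofReal_zero, zero_mul]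
      · simp
  have hpz : ∀ i, p i = 0 := fun i => (key N).1 i (Nat.lt_succ_iff.mp i.isLt)
  have hqz : ∀ j, q j = 0 := fun j => (key N).2 j j.isLt
  have hwz : w = 0 := by
    have h := hrowp (Fin.last N)
    simpa [hpz, hqz, hγ0] using h
  apply hv
  funext x
  rcases x with (i | j) | u
  · simp [hp, hpz]
  · simp [hq, hqz]
  · rw [Subsingleton.elim u 0, hw, hwz, Pi.zero_apply]
end

section
/- Let T_d > 0 and ω₀ = π/(2·T_d). For every s ∈ ℂ with e^{−2·T_d·s} ≠ 1, the infinite product ∏_{k=1}^{∞} (2k/(2k−1))² · (s² + (2k−1)²·ω₀²)/(s² + 4k²·ω₀²) converges (is multipliable) and its value equals T_d·s·(1 + e^{−2·T_d·s})/(1 − e^{−2·T_d·s}). -/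
/-!
With `z = i T_d s / π` the `k`-th factor is the quotient of `1 - (2z)² / (2k-1)²` by `1 - z² / k²`.
The denominators multiply to `sin (π z) / (π z)` by Euler's sine product (`hasProd_sineTerm`).
The numerators are the odd-indexed factors of Euler's product at `2z`, whose even-indexed factors
are exactly the denominators; hence they multiply to the quotient of `sin (2 π z) / (2 π z)` by
`sin (π z) / (π z)`, which is `cos (π z)` (`hasProd_sineTerm_odd`). The value of the product is
therefore `π z cos (π z) / sin (π z) = T_d s coth (T_d s)`. The hypothesis on `s` says precisely
that `sin (π z) ≠ 0`, so the two products may be divided.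
-/

/-- Euler's sine product as an unconditional product; unlike `euler_sineTerm_tprod`, nonzero
integers are allowed. -/
lemma hasProd_sineTerm {z : ℂ} (hz : z ≠ 0) :
    HasProd (fun k : ℕ => 1 + sineTerm z k)
      (Complex.sin (Real.pi * z) / (Real.pi * z)) := by
  rw [Multipliable.hasProd_iff_tendsto_nat (multipliable_sineTerm z)]
  exact tendsto_euler_sin_prod' hz

/-- Euler's cosine product, as the part of the sine product at `2 z` with odd denominators
`2 k + 1`. -/
lemma hasProd_sineTerm_odd {z : ℂ} (hz : z ≠ 0) (hsin : Complex.sin (Real.pi * z) ≠ 0) :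
    HasProd (fun k : ℕ => 1 + sineTerm (2 * z) (2 * k)) (Complex.cos (Real.pi * z)) := by
  have hpi : (Real.pi : ℂ) ≠ 0 := by exact_mod_cast Real.pi_ne_zero
  have hsum : Summable (fun k => ‖sineTerm (2 * z) k‖) := by
    refine (summable_pow_div_add ((2 * z) ^ 2) 2 1 Nat.one_lt_two).congr fun k => ?_
    rw [sineTerm, neg_div, norm_neg, Nat.cast_one]
  have hodd : Multipliable (fun k : ℕ => 1 + sineTerm (2 * z) (2 * k)) :=
    multipliable_one_add_of_summable
      (hsum.comp_injective (mul_right_injective₀ two_ne_zero))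
  have heq : (fun k : ℕ => 1 + sineTerm (2 * z) (2 * k + 1)) = fun k : ℕ => 1 + sineTerm z k := by
    funext k
    have hk : (k : ℂ) + 1 ≠ 0 := Nat.cast_add_one_ne_zero k
    have hk' : (2 * k : ℂ) + 1 + 1 ≠ 0 := by
      rw [show (2 * k : ℂ) + 1 + 1 = 2 * (k + 1) by ring]
      exact mul_ne_zero two_ne_zero hk
    simp only [sineTerm]
    push_cast
    field_simp
    ring
  have heven : Multipliable (fun k : ℕ => 1 + sineTerm (2 * z) (2 * k + 1)) := by
    rw [heq]
    exact multipliable_sineTerm z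
  have hsplit := tprod_even_mul_odd (f := fun k : ℕ => 1 + sineTerm (2 * z) k) hodd heven
  rw [heq, (hasProd_sineTerm hz).tprod_eq,
    (hasProd_sineTerm (mul_ne_zero two_ne_zero hz)).tprod_eq,
    show (Real.pi : ℂ) * (2 * z) = 2 * (Real.pi * z) by ring, Complex.sin_two_mul] at hsplit
  have hval : ∏' k : ℕ, (1 + sineTerm (2 * z) (2 * k)) = Complex.cos (Real.pi * z) := by
    apply mul_right_cancel₀ (div_ne_zero hsin (mul_ne_zero hpi hz))
    rw [hsplit]
    field_simp
  exact hval ▸ hodd.hasProd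

/-- For `ω₀ = π/(2T_d)` and `s` with `e^{−2T_d s} ≠ 1`, the infinite product
`∏_{k≥1} (2k/(2k−1))² (s² + (2k−1)² ω₀²)/(s² + 4k² ω₀²)` is multipliable with value
`T_d s (1 + e^{−2T_d s})/(1 − e^{−2T_d s})`. (The product over positive integers `k` is
encoded as a product over `k : ℕ` with `k`-th factor given by the positive integer `k+1`.) -/
theorem stmt_14 (Td : ℝ) (hTd : 0 < Td) (ω₀ : ℝ) (hω₀ : ω₀ = Real.pi / (2 * Td))
    (s : ℂ) (hs : Complex.exp (-2 * (Td : ℂ) * s) ≠ 1) :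
    Multipliable (fun k : ℕ =>
      (2 * ((k : ℂ) + 1) / (2 * ((k : ℂ) + 1) - 1)) ^ 2 *
        ((s ^ 2 + (2 * ((k : ℂ) + 1) - 1) ^ 2 * (ω₀ : ℂ) ^ 2) /
          (s ^ 2 + 4 * ((k : ℂ) + 1) ^ 2 * (ω₀ : ℂ) ^ 2))) ∧
    (∏' k : ℕ,
      (2 * ((k : ℂ) + 1) / (2 * ((k : ℂ) + 1) - 1)) ^ 2 *
        ((s ^ 2 + (2 * ((k : ℂ) + 1) - 1) ^ 2 * (ω₀ : ℂ) ^ 2) /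
          (s ^ 2 + 4 * ((k : ℂ) + 1) ^ 2 * (ω₀ : ℂ) ^ 2))) =
      (Td : ℂ) * s * (1 + Complex.exp (-2 * (Td : ℂ) * s)) /
        (1 - Complex.exp (-2 * (Td : ℂ) * s)) := by
  have hpi : (Real.pi : ℂ) ≠ 0 := by exact_mod_cast Real.pi_ne_zero
  have hT : (Td : ℂ) ≠ 0 := by exact_mod_cast hTd.ne'
  have hs0 : s ≠ 0 := by
    rintro rfl
    simp at hs
  obtain ⟨z, hzdef⟩ : ∃ z : ℂ, z = Complex.I * Td * s / Real.pi := ⟨_, rfl⟩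
  have hz : z ≠ 0 := by
    rw [hzdef]
    exact div_ne_zero (mul_ne_zero (mul_ne_zero Complex.I_ne_zero hT) hs0) hpi
  have hpz : (Real.pi : ℂ) * z = (Td * s) * Complex.I := by
    rw [hzdef]
    field_simp
  have hE2 : Complex.exp (-2 * (Td : ℂ) * s) = Complex.exp (-(Td * s)) ^ 2 := by
    rw [← Complex.exp_nat_mul]
    congr 1
    push_cast
    ring
  have hE : Complex.exp (-(Td * s)) ≠ 0 := Complex.exp_ne_zero _
  have hEinv : Complex.exp (Td * s) = (Complex.exp (-(Td * s)))⁻¹ := by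
    rw [← Complex.exp_neg, neg_neg]
  rw [hE2] at hs ⊢
  have hden : 1 - Complex.exp (-(Td * s)) ^ 2 ≠ 0 := sub_ne_zero.mpr hs.symm
  have hsin : Complex.sin (Real.pi * z) =
      (1 - Complex.exp (-(Td * s)) ^ 2) / (2 * Complex.exp (-(Td * s))) * Complex.I := by
    rw [hpz, Complex.sin_mul_I, Complex.sinh, hEinv]
    field_simp
  have hcos : Complex.cos (Real.pi * z) =
      (1 + Complex.exp (-(Td * s)) ^ 2) / (2 * Complex.exp (-(Td * s))) := by
    rw [hpz, Complex.cos_mul_I, Complex.cosh, hEinv]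
    field_simp
  have hsin0 : Complex.sin (Real.pi * z) ≠ 0 := by
    rw [hsin]
    exact mul_ne_zero (div_ne_zero hden (mul_ne_zero two_ne_zero hE)) Complex.I_ne_zero
  have key := (hasProd_sineTerm_odd hz hsin0).div₀ (hasProd_sineTerm hz)
    (div_ne_zero hsin0 (mul_ne_zero hpi hz))
  have hω : (ω₀ : ℂ) = Real.pi / (2 * Td) := by
    rw [hω₀]
    push_cast
    rfl
  have hω0 : (ω₀ : ℂ) ≠ 0 := by
    rw [hω]
    exact div_ne_zero hpi (mul_ne_zero two_ne_zero hT)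
  have hz2 : z ^ 2 = -(s ^ 2 / (4 * (ω₀ : ℂ) ^ 2)) := by
    rw [hzdef, hω, div_pow, mul_pow, mul_pow, Complex.I_sq]
    field_simp
    norm_num
  have hval : Complex.cos (Real.pi * z) / (Complex.sin (Real.pi * z) / (Real.pi * z)) =
      (Td : ℂ) * s * (1 + Complex.exp (-(Td * s)) ^ 2) / (1 - Complex.exp (-(Td * s)) ^ 2) := by
    have hI := Complex.I_ne_zero
    rw [hsin, hcos, hpz]
    field_simp
  have hfun : (fun k : ℕ => (1 + sineTerm (2 * z) (2 * k)) / (1 + sineTerm z k)) =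
      fun k : ℕ => (2 * ((k : ℂ) + 1) / (2 * ((k : ℂ) + 1) - 1)) ^ 2 *
        ((s ^ 2 + (2 * ((k : ℂ) + 1) - 1) ^ 2 * (ω₀ : ℂ) ^ 2) /
          (s ^ 2 + 4 * ((k : ℂ) + 1) ^ 2 * (ω₀ : ℂ) ^ 2)) := by
    funext k
    have hk : (k : ℂ) + 1 ≠ 0 := Nat.cast_add_one_ne_zero k
    have hk2 : (2 * k : ℂ) + 1 ≠ 0 := by exact_mod_cast Nat.succ_ne_zero (2 * k)
    have hodd : 1 + sineTerm (2 * z) (2 * k) =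
        (s ^ 2 + (2 * (k : ℂ) + 1) ^ 2 * (ω₀ : ℂ) ^ 2) /
          ((2 * (k : ℂ) + 1) ^ 2 * (ω₀ : ℂ) ^ 2) := by
      simp only [sineTerm, mul_pow, hz2]
      push_cast
      field_simp
      ring
    have heven : 1 + sineTerm z k =
        (s ^ 2 + 4 * ((k : ℂ) + 1) ^ 2 * (ω₀ : ℂ) ^ 2) /
          (4 * ((k : ℂ) + 1) ^ 2 * (ω₀ : ℂ) ^ 2) := by
      simp only [sineTerm, hz2]
      field_simp
      ring
    rw [hodd, heven, show 2 * ((k : ℂ) + 1) - 1 = 2 * k + 1 by ring]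
    field_simp
    ring
  rw [hval, hfun] at key
  exact ⟨key.multipliable, key.tprod_eq⟩
end

section
/- The matrix A is similar (over ℝ) to the (2N+1)×(2N+1) matrix Ā given in 3×3 block form by Ā = [[0, 0, 0],[0, 0_{N×N}, Ā₁₂],[0, β·I_N, −2α·I_N]], where the (1,1) block is the 1×1 zero matrix and Ā₁₂ = γ·T_N with T_N the N×N tridiagonal matrix having −2 on the main diagonal, 1 on the first sub- and super-diagonals, and 0 elsewhere. In particular, A and Ā have the same characteristic polynomial. -/
/-!
With `Q` the matrix that replaces a vector `v` of `N + 1` coordinates by its sum and its `N`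
successive differences `v i - v (i + 1)`, the similarity is conjugation by `P = diag(Q, I)`.
Writing `D` for the difference rows of `Q`, one has `A₂₁ = β D` and `A₁₂ = -γ Dᵀ`. Thus
`Q A₁₂` has first row zero, since the columns of `Dᵀ` sum to zero, and its other rows form
`-γ D Dᵀ = γ T_N`; while `Ā₂₁ = β [0 | I]` gives `Ā₂₁ Q = β D = A₂₁`. Hence `Ā P = P A`.
The matrix `Q` is invertible because a vector with vanishing differences is constant, and a
constant vector with vanishing sum is zero (`sumDiff_isUnit_det`).
-/

/-- The `(N + 1) × (N + 1)` matrix whose row `0` is all ones and whose row `i + 1` is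
`e_i - e_{i+1}`: it sends a vector to its sum followed by its successive differences. -/
def sumDiff (N : ℕ) : Matrix (Fin (N + 1)) (Fin (N + 1)) ℝ :=
  Matrix.of (Fin.cons (fun _ => 1)
    (fun i k => (if k = i.castSucc then 1 else 0) - (if k = i.succ then 1 else 0)))

lemma sumDiff_zero (N : ℕ) (k : Fin (N + 1)) : sumDiff N 0 k = 1 := rfl

lemma sumDiff_succ (N : ℕ) (i : Fin N) (k : Fin (N + 1)) :
    sumDiff N i.succ k = (if k = i.castSucc then 1 else 0) - (if k = i.succ then 1 else 0) := rfl

lemma sum_sumDiff_zero (N : ℕ) (v : Fin (N + 1) → ℝ) :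
    ∑ k, sumDiff N 0 k * v k = ∑ k, v k := by
  simp [sumDiff_zero]

lemma sum_sumDiff_succ (N : ℕ) (i : Fin N) (v : Fin (N + 1) → ℝ) :
    ∑ k, sumDiff N i.succ k * v k = v i.castSucc - v i.succ := by
  simp [sumDiff_succ, sub_mul, Finset.sum_sub_distrib]

lemma sumDiff_isUnit_det (N : ℕ) : IsUnit (sumDiff N).det := by
  rw [isUnit_iff_ne_zero]
  intro h
  obtain ⟨v, hv, hQ⟩ := Matrix.exists_mulVec_eq_zero_iff.mpr h
  have hstep (i : Fin N) : v i.succ = v i.castSucc := by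
    have := congrFun hQ i.succ
    simp only [Matrix.mulVec, dotProduct, sum_sumDiff_succ, Pi.zero_apply] at this
    linarith
  have hconst (k : Fin (N + 1)) : v k = v 0 := by
    induction k using Fin.induction with
    | zero => rfl
    | succ i ih => rw [hstep, ih]
  have hsum := congrFun hQ 0
  simp only [Matrix.mulVec, dotProduct, sum_sumDiff_zero, Pi.zero_apply, hconst,
    Finset.sum_const, Finset.card_univ, Fintype.card_fin, nsmul_eq_mul] at hsum
  have hv0 : v 0 = 0 := (mul_eq_zero.mp hsum).resolve_left (by positivity)
  exact hv (funext fun k => (hconst k).trans hv0)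


/-- `A` is similar over ℝ to the block matrix
`Ā = [[0, 0, 0], [0, 0, γ T_N], [0, β I_N, −2α I_N]]` where `T_N` is the tridiagonal matrix
with `−2` on the diagonal and `1` on the sub- and super-diagonals; in particular `A` and `Ā`
have the same characteristic polynomial. (Here `Ā` is encoded on the index type
`Fin (N+1) ⊕ Fin N`, the first `1 + N` indices `Sum.inl i` carrying the 1×1 zero block at
`i = 0` followed by the middle block of size `N`.) -/
theorem stmt_18 (N : ℕ) (hN : 1 ≤ N) (c 𝒜 Δℓ α : ℝ)
    (hc : 0 < c) (h𝒜 : 0 < 𝒜) (hΔℓ : 0 < Δℓ) (hα : 0 < α)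
    (γ β : ℝ) (hγ : γ = c ^ 2 / (𝒜 * Δℓ)) (hβ : β = 𝒜 / Δℓ)
    (A : Matrix (Fin (N + 1) ⊕ Fin N) (Fin (N + 1) ⊕ Fin N) ℝ)
    (hA11 : ∀ i j, A (Sum.inl i) (Sum.inl j) = 0)
    (hA12 : ∀ i j, A (Sum.inl i) (Sum.inr j) =
      if (i : ℕ) = (j : ℕ) then -γ else if (i : ℕ) = (j : ℕ) + 1 then γ else 0)
    (hA21 : ∀ i j, A (Sum.inr i) (Sum.inl j) =
      if (j : ℕ) = (i : ℕ) then β else if (j : ℕ) = (i : ℕ) + 1 then -β else 0)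
    (hA22 : ∀ i j, A (Sum.inr i) (Sum.inr j) = if i = j then -(2 * α) else 0)
    (Abar : Matrix (Fin (N + 1) ⊕ Fin N) (Fin (N + 1) ⊕ Fin N) ℝ)
    (hAbar11 : ∀ i j, Abar (Sum.inl i) (Sum.inl j) = 0)
    (hAbar12 : ∀ i j, Abar (Sum.inl i) (Sum.inr j) =
      if (i : ℕ) = 0 then 0
      else γ * (if (i : ℕ) = (j : ℕ) + 1 then -2
        else if (i : ℕ) = (j : ℕ) ∨ (i : ℕ) = (j : ℕ) + 2 then 1 else 0))
    (hAbar21 : ∀ i j, Abar (Sum.inr i) (Sum.inl j) =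
      if (j : ℕ) = (i : ℕ) + 1 then β else 0)
    (hAbar22 : ∀ i j, Abar (Sum.inr i) (Sum.inr j) = if i = j then -(2 * α) else 0) :
    (∃ P : Matrix (Fin (N + 1) ⊕ Fin N) (Fin (N + 1) ⊕ Fin N) ℝ,
      IsUnit P.det ∧ Abar = P * A * P⁻¹) ∧
    A.charpoly = Abar.charpoly := by
  set P : Matrix (Fin (N + 1) ⊕ Fin N) (Fin (N + 1) ⊕ Fin N) ℝ :=
    Matrix.fromBlocks (sumDiff N) 0 0 1 with hP
  have hdet : IsUnit P.det := by
    simpa [hP, Matrix.det_fromBlocks_zero₂₁] using sumDiff_isUnit_det N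
  have hcomm : Abar * P = P * A := by
    ext (i | i) (j | j)
    · simp [hP, Matrix.mul_apply, hA11, hAbar11]
    · simp only [hP, Matrix.mul_apply, Fintype.sum_sum_type, Matrix.fromBlocks_apply₁₁,
        Matrix.fromBlocks_apply₁₂, Matrix.fromBlocks_apply₂₂, Matrix.zero_apply, mul_zero,
        zero_mul, Finset.sum_const_zero, zero_add, add_zero, Matrix.one_apply, mul_ite, mul_one,
        Finset.sum_ite_eq', Finset.mem_univ, if_true]
      cases i using Fin.cases with
      | zero =>
        rw [sum_sumDiff_zero]
        have hcol (k : Fin (N + 1)) : A (Sum.inl k) (Sum.inr j) =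
            (if k = j.castSucc then -γ else 0) + (if k = j.succ then γ else 0) := by
          rw [hA12]
          simp only [Fin.ext_iff, Fin.val_castSucc, Fin.val_succ]
          split_ifs <;> first | omega | simp
        simp [hcol, Finset.sum_add_distrib, hAbar12]
      | succ i =>
        rw [sum_sumDiff_succ N i fun k => A (Sum.inl k) (Sum.inr j), hA12, hA12, hAbar12]
        simp only [Fin.val_castSucc, Fin.val_succ]
        rw [if_neg (Nat.succ_ne_zero (i : ℕ))]
        split_ifs <;> first | omega | ring
    · simp only [hP, Matrix.mul_apply, Fintype.sum_sum_type, Matrix.fromBlocks_apply₁₁,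
        Matrix.fromBlocks_apply₂₁, Matrix.fromBlocks_apply₂₂, Matrix.zero_apply, mul_zero,
        zero_mul, Finset.sum_const_zero, zero_add, add_zero, Matrix.one_apply, ite_mul, one_mul,
        Finset.sum_ite_eq, Finset.mem_univ, if_true]
      have hrow (k : Fin (N + 1)) : Abar (Sum.inr i) (Sum.inl k) =
          if k = i.succ then β else 0 := by
        simp [hAbar21, Fin.ext_iff]
      simp only [hrow, ite_mul, zero_mul, Finset.sum_ite_eq', Finset.mem_univ, if_true,
        sumDiff_succ, hA21]
      simp only [Fin.ext_iff, Fin.val_castSucc, Fin.val_succ]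
      split_ifs <;> first | omega | ring
    · simp only [hP, Matrix.mul_apply, Fintype.sum_sum_type, Matrix.fromBlocks_apply₁₂,
        Matrix.fromBlocks_apply₂₁, Matrix.fromBlocks_apply₂₂, Matrix.zero_apply, mul_zero,
        zero_mul, Finset.sum_const_zero, zero_add, Matrix.one_apply, mul_ite, ite_mul, mul_one,
        one_mul, Finset.sum_ite_eq, Finset.sum_ite_eq', Finset.mem_univ, if_true, hA22, hAbar22]
  have hsim : Abar = P * A * P⁻¹ := by
    rw [← hcomm, Matrix.mul_nonsing_inv_cancel_right _ _ hdet]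
  refine ⟨⟨P, hdet, hsim⟩, ?_⟩
  obtain ⟨U, hU⟩ := (Matrix.isUnit_iff_isUnit_det P).mpr hdet
  rw [hsim, ← hU, Matrix.charpoly_units_conj]
end
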